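/- For every $n\ge0$ and real $t$: $|B_n-A_n|^2=\sum_{r=0}^n t^{2r}K_r(n)$, where $K_r(n)=\sum_{p=-r}^r(-1)^p\Delta_{r+p}^n\Delta_{r-p}^n$; moreover $K_0(n)=1$ and for $1\le r\le n$ the coefficient $K_r(n)$ admits the closed form $K_r(n)=\sum T_1^{l_1}T_{k_2}^{l_2}\cdots T_{k_r}^{l_r}\,\rho_{k_{r+1}-1}\,2^{H_r}$, where the sum runs over all integer chains $1\le l_1<k_2\le l_2<\cdots<k_r\le l_r<k_{r+1}\le n+1$ and $H_r=\#\{1\le i\le r: l_i+1<k_{i+1}\}$ (with $k_1:=1$). -/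

import Mathlib

open scoped Classical

/-- `ρ 0 = 1`, `ρ n = a 1 ⋯ a n`. -/
noncomputable def rho (a : ℕ → ℝ) (n : ℕ) : ℝ := ∏ k ∈ Finset.Icc 1 n, a k

/-- `R_k^l = ∑_{s=k}^l η s · ρ l / ρ s`. -/
noncomputable def Rkl (a η : ℕ → ℝ) (k l : ℕ) : ℝ :=
  ∑ s ∈ Finset.Icc k l, η s * (rho a l / rho a s)

/-- `T_k^l = (R_k^l)² ρ (k-1) / ρ l`. -/
noncomputable def Tkl (a η : ℕ → ℝ) (k l : ℕ) : ℝ :=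
  (Rkl a η k l) ^ 2 * (rho a (k - 1) / rho a l)

/-- `Δ_r^n = ∑_{1 ≤ k₁ < ⋯ < k_r ≤ n} R_1^{k₁} R_{k₁+1}^{k₂} ⋯ R_{k_{r-1}+1}^{k_r}`
(`Δ_0^n = 1`, and `Δ_r^n = 0` for `r > n`). -/
noncomputable def Delta (a η : ℕ → ℝ) (r n : ℕ) : ℝ :=
  ∑ k ∈ (Fintype.piFinset fun _ : Fin r => Finset.Icc 1 n).filter
      (fun k => ∀ i j : Fin r, i < j → k i < k j),
    ∏ i : Fin r, Rkl a η (if (i : ℕ) = 0 then 1 else k ⟨(i : ℕ) - 1, Nat.lt_of_le_of_lt (Nat.sub_le _ _) i.isLt⟩ + 1) (k i)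

/-- `K_r(n) = ∑_{p=-r}^r (-1)^p Δ_{r+p}^n Δ_{r-p}^n`. -/
noncomputable def Kr (a η : ℕ → ℝ) (r n : ℕ) : ℝ :=
  ∑ p ∈ Finset.Icc (-(r : ℤ)) (r : ℤ),
    (-1 : ℝ) ^ p * Delta a η ((r : ℤ) + p).toNat n * Delta a η ((r : ℤ) - p).toNat n

/-- Shift of the data: `θ^j` replaces `(a k, η k)` by `(a (k+j), η (k+j))`. -/
def shift (f : ℕ → ℝ) (j : ℕ) : ℕ → ℝ := fun k => f (k + j)

open Polynomial in
noncomputable def PE (a η : ℕ → ℝ) : ℕ → ℝ[X] × ℝ[X]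
  | 0 => (1, 0)
  | n + 1 => ((PE a η n).1 + (C (a (n+1)) * (PE a η n).2 + C (η (n+1)) * X * (PE a η n).1),
      C (a (n+1)) * (PE a η n).2 + C (η (n+1)) * X * (PE a η n).1)

noncomputable def dl (a η : ℕ → ℝ) : ℕ → ℕ → ℝ
  | 0, n => if n = 0 then 1 else 0
  | r + 1, n => ∑ m ∈ Finset.range n, dl a η r m * Rkl a η (m + 1) n

noncomputable def yy (a η : ℕ → ℝ) : ℕ → ℕ → ℝ
  | 0, n => if n = 1 then 1 else 0
  | r + 1, n => ∑ l ∈ Finset.Ico 1 n, (if l + 1 < n then (2:ℝ) else 1) *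
      ∑ k ∈ Finset.Icc 1 l, Tkl a η k l * yy a η r k

theorem rho_succ (a : ℕ → ℝ) (n : ℕ) : rho a (n+1) = rho a n * a (n+1) := by
  unfold rho
  rw [Finset.prod_Icc_succ_top (by omega)]

theorem rho_pos (a : ℕ → ℝ) (ha : ∀ k : ℕ, 1 ≤ k → 0 < a k) (n : ℕ) : 0 < rho a n :=
  Finset.prod_pos fun k hk => ha k (Finset.mem_Icc.1 hk).1

theorem Rkl_succ (a η : ℕ → ℝ) (ha : ∀ k : ℕ, 1 ≤ k → 0 < a k) (k n : ℕ) (hk : k ≤ n + 1) :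
    Rkl a η k (n+1) = a (n+1) * Rkl a η k n + η (n+1) := by
  unfold Rkl
  rw [Finset.sum_Icc_succ_top hk, Finset.mul_sum, div_self (rho_pos a ha _).ne', mul_one]
  congr 1
  refine Finset.sum_congr rfl fun s _ => ?_
  rw [rho_succ]; ring

theorem Rkl_empty (a η : ℕ → ℝ) (n : ℕ) : Rkl a η (n+1) n = 0 := by
  unfold Rkl
  rw [Finset.Icc_eq_empty (by omega), Finset.sum_empty]

theorem sum_pi_snoc (r : ℕ) (S : Finset ℕ) (f : (Fin (r+1) → ℕ) → ℝ) :
    ∑ k ∈ Fintype.piFinset (fun _ : Fin (r+1) => S), f k =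
      ∑ m ∈ S, ∑ k ∈ Fintype.piFinset (fun _ : Fin r => S), f (Fin.snoc (α := fun _ => ℕ) k m) := by
  rw [← Finset.sum_product']
  have hk : ∀ k : Fin (r+1) → ℕ,
      Fin.snoc (α := fun _ => ℕ) (fun i : Fin r => k i.castSucc) (k (Fin.last r)) = k := by
    intro k
    funext i
    refine Fin.lastCases ?_ (fun j => ?_) i <;> simp
  refine Finset.sum_nbij' (fun k => (k (Fin.last r), fun i : Fin r => k i.castSucc))
    (fun q => Fin.snoc (α := fun _ => ℕ) q.2 q.1) ?_ ?_ ?_ ?_ ?_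
  · intro k hk
    simp only [Fintype.mem_piFinset, Finset.mem_product] at hk ⊢
    exact ⟨hk _, fun i => hk _⟩
  · intro q hq
    simp only [Fintype.mem_piFinset, Finset.mem_product] at hq ⊢
    intro i
    refine Fin.lastCases ?_ (fun j => ?_) i
    · simpa using hq.1
    · simpa using hq.2 j
  · intro k _; exact hk k
  · intro q _; simp
  · intro k _; exact congrArg f (hk k).symm

/-- last entry or default -/
def lst (d : ℕ) : (r : ℕ) → (Fin r → ℕ) → ℕ
  | 0, _ => d
  | r + 1, k => k (Fin.last r)

theorem dl_zero_of_lt (a η : ℕ → ℝ) (r : ℕ) : dl a η (r+1) 0 = 0 := by simp [dl]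

noncomputable def prodR (a η : ℕ → ℝ) (r : ℕ) (k : Fin r → ℕ) : ℝ :=
  ∏ i : Fin r, Rkl a η (if (i : ℕ) = 0 then 1 else k ⟨(i : ℕ) - 1, Nat.lt_of_le_of_lt (Nat.sub_le _ _) i.isLt⟩ + 1) (k i)

theorem prodR_snoc (a η : ℕ → ℝ) (r : ℕ) (k : Fin r → ℕ) (m : ℕ) :
    prodR a η (r+1) (Fin.snoc (α := fun _ => ℕ) k m) =
      prodR a η r k * Rkl a η (lst 0 r k + 1) m := by
  unfold prodR
  rw [Fin.prod_univ_castSucc]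
  congr 1
  · refine Finset.prod_congr rfl fun i _ => ?_
    have h : (⟨(i.castSucc : ℕ) - 1, Nat.lt_of_le_of_lt (Nat.sub_le _ _) i.castSucc.isLt⟩ : Fin (r+1)) =
      Fin.castSucc ⟨(i : ℕ) - 1, Nat.lt_of_le_of_lt (Nat.sub_le _ _) i.isLt⟩ := rfl
    rw [h, Fin.snoc_castSucc, Fin.snoc_castSucc]
    rfl
  · rw [Fin.snoc_last]
    cases r with
    | zero => simp [lst]
    | succ r =>
      have h : (⟨((Fin.last (r+1) : Fin (r+2)) : ℕ) - 1, Nat.lt_of_le_of_lt (Nat.sub_le _ _) (Fin.last (r+1)).isLt⟩ : Fin (r+2)) =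
        Fin.castSucc (Fin.last r) := rfl
      rw [h, Fin.snoc_castSucc]
      simp [lst]

theorem mono_snoc (r : ℕ) (k : Fin r → ℕ) (m : ℕ) (hm : 1 ≤ m) :
    (∀ i j : Fin (r+1), i < j → Fin.snoc (α := fun _ => ℕ) k m i < Fin.snoc (α := fun _ => ℕ) k m j) ↔
      (∀ i j : Fin r, i < j → k i < k j) ∧ lst 0 r k < m := by
  constructor
  · intro h
    refine ⟨fun i j hij => ?_, ?_⟩
    · simpa using h i.castSucc j.castSucc (by simpa using hij)
    · cases r with
      | zero => exact hm
      | succ r => simpa [lst] using h (Fin.last r).castSucc (Fin.last (r+1)) (Fin.castSucc_lt_last _)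
  · rintro ⟨h1, h2⟩ i j
    refine Fin.lastCases ?_ (fun j => ?_) j
    · refine Fin.lastCases ?_ (fun i => ?_) i
      · intro h; exact absurd h (lt_irrefl _)
      · intro _
        rw [Fin.snoc_castSucc, Fin.snoc_last]
        cases r with
        | zero => exact i.elim0
        | succ r =>
          refine lt_of_le_of_lt ?_ h2
          rcases (Fin.le_last i).lt_or_eq with h | h
          · exact (h1 _ _ h).le
          · rw [h]; rfl
    · refine Fin.lastCases ?_ (fun i => ?_) i
      · intro h; exact absurd h (not_lt.2 (Fin.le_last _))
      · intro h
        rw [Fin.snoc_castSucc, Fin.snoc_castSucc]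
        exact h1 _ _ (by simpa using h)

theorem chain_sum (a η : ℕ → ℝ) (n r : ℕ) : ∀ (w : ℕ → ℝ),
    ∑ k ∈ Fintype.piFinset (fun _ : Fin r => Finset.Icc 1 n),
      (if (∀ i j : Fin r, i < j → k i < k j) then prodR a η r k * w (lst 0 r k) else 0) =
    ∑ m ∈ Finset.range (n+1), dl a η r m * w m := by
  induction r with
  | zero =>
    intro w
    simp [prodR, lst, dl]
  | succ r ih =>
    intro w
    rw [sum_pi_snoc, Finset.sum_range_succ', dl_zero_of_lt, zero_mul, add_zero,
      Finset.range_eq_Ico, Finset.sum_Ico_add' (fun m => dl a η (r+1) m * w m) 0 n 1]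
    refine Finset.sum_congr (by ext; simp) fun m hm => ?_
    obtain ⟨hm1, hm2⟩ := Finset.mem_Icc.1 hm
    have := ih (fun x => if x < m then Rkl a η (x+1) m * w m else 0)
    calc _ = _ := ?_
      _ = _ := this
      _ = _ := ?_
    · refine Finset.sum_congr rfl fun k _ => ?_
      simp only [mono_snoc r k m hm1, prodR_snoc]
      have hl : lst 0 (r+1) (Fin.snoc (α := fun _ => ℕ) k m) = m := by simp [lst]
      rw [hl]
      by_cases h1 : ∀ i j : Fin r, i < j → k i < k j
      · by_cases h2 : lst 0 r k < m
        · rw [if_pos ⟨h1, h2⟩, if_pos h1, if_pos h2]; ring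
        · rw [if_neg (fun h => h2 h.2), if_pos h1, if_neg h2]; ring
      · rw [if_neg (fun h => h1 h.1), if_neg h1]
    · rw [dl, Finset.sum_mul]
      simp only [mul_ite, mul_zero]
      rw [← Finset.sum_filter]
      refine Finset.sum_congr (by ext; simp; omega) fun x _ => by ring

theorem Delta_eq (a η : ℕ → ℝ) (r n : ℕ) :
    Delta a η r n = ∑ m ∈ Finset.range (n+1), dl a η r m := by
  have := chain_sum a η n r (fun _ => 1)
  simp only [mul_one] at this
  rw [← this]
  unfold Delta
  rw [Finset.sum_filter]
  rfl

theorem dl_rec (a η : ℕ → ℝ) (ha : ∀ k : ℕ, 1 ≤ k → 0 < a k) (r n : ℕ) :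
    dl a η (r+1) (n+1) = a (n+1) * dl a η (r+1) n + η (n+1) * Delta a η r n := by
  rw [Delta_eq, dl, dl]
  have : ∑ m ∈ Finset.range n, dl a η r m * Rkl a η (m+1) n =
      ∑ m ∈ Finset.range (n+1), dl a η r m * Rkl a η (m+1) n := by
    rw [Finset.sum_range_succ, Rkl_empty]; ring
  rw [this, Finset.mul_sum, Finset.mul_sum, ← Finset.sum_add_distrib]
  refine Finset.sum_congr rfl fun m hm => ?_
  rw [Rkl_succ a η ha _ _ (by have := Finset.mem_range.1 hm; omega)]
  ring

theorem coeff_PE (a η : ℕ → ℝ) (ha : ∀ k : ℕ, 1 ≤ k → 0 < a k) (n : ℕ) :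
    (∀ r, (PE a η n).1.coeff r = Delta a η r n) ∧ (PE a η n).2.coeff 0 = 0 ∧
      ∀ r, (PE a η n).2.coeff (r+1) = dl a η (r+1) n := by
  induction n with
  | zero =>
    refine ⟨fun r => ?_, by simp [PE], fun r => by simp [PE, dl]⟩
    rw [Delta_eq]
    cases r <;> simp [PE, dl, Polynomial.coeff_one]
  | succ n ih =>
    obtain ⟨h1, h2, h3⟩ := ih
    have e0 : (PE a η (n+1)).2.coeff 0 = 0 := by simp [PE, h2]
    have e1 : ∀ r, (PE a η (n+1)).2.coeff (r+1) = dl a η (r+1) (n+1) := by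
      intro r
      rw [dl_rec a η ha, ← h1, ← h3]
      simp [PE, mul_assoc, Polynomial.coeff_X_mul]
    refine ⟨fun r => ?_, e0, e1⟩
    have : (PE a η (n+1)).1 = (PE a η n).1 + (PE a η (n+1)).2 := rfl
    rw [this, Polynomial.coeff_add, h1, Delta_eq, Delta_eq, Finset.sum_range_succ _ (n+1)]
    congr 1
    cases r with
    | zero => rw [e0]; simp [dl]
    | succ r => exact e1 r

theorem deg_PE (a η : ℕ → ℝ) (n : ℕ) :
    (PE a η n).1.natDegree ≤ n ∧ (PE a η n).2.natDegree ≤ n := by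
  induction n with
  | zero => simp [PE]
  | succ n ih =>
    have e : (PE a η (n+1)).2.natDegree ≤ n + 1 := by
      show (Polynomial.C _ * _ + Polynomial.C _ * Polynomial.X * _ : Polynomial ℝ).natDegree ≤ _
      refine Polynomial.natDegree_add_le_of_degree_le ?_ ?_
      · exact (Polynomial.natDegree_C_mul_le _ _).trans (by omega)
      · refine Polynomial.natDegree_mul_le.trans ?_
        have := Polynomial.natDegree_C_mul_X_pow_le (η (n+1)) 1
        rw [pow_one] at this
        omega
    refine ⟨?_, e⟩
    have : (PE a η (n+1)).1 = (PE a η n).1 + (PE a η (n+1)).2 := rfl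
    rw [this]
    exact Polynomial.natDegree_add_le_of_degree_le (by omega) e

noncomputable def prodT (a η : ℕ → ℝ) (r : ℕ) (k l : Fin r → ℕ) : ℝ :=
  ∏ i : Fin r, (Tkl a η (if (i : ℕ) = 0 then 1 else k ⟨(i : ℕ) - 1, Nat.lt_of_le_of_lt (Nat.sub_le _ _) i.isLt⟩) (l i)
    * (if l i + 1 < k i then (2:ℝ) else 1))

def cnd (r : ℕ) (k l : Fin r → ℕ) : Prop :=
  (∀ i : Fin r, l i < k i) ∧ (∀ i j : Fin r, (i : ℕ) + 1 = (j : ℕ) → k i ≤ l j)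

theorem prodT_snoc (a η : ℕ → ℝ) (r : ℕ) (k l : Fin r → ℕ) (K L : ℕ) :
    prodT a η (r+1) (Fin.snoc (α := fun _ => ℕ) k K) (Fin.snoc (α := fun _ => ℕ) l L) =
      prodT a η r k l * (Tkl a η (lst 1 r k) L * (if L + 1 < K then (2:ℝ) else 1)) := by
  unfold prodT
  rw [Fin.prod_univ_castSucc]
  congr 1
  · refine Finset.prod_congr rfl fun i _ => ?_
    have h : (⟨(i.castSucc : ℕ) - 1, Nat.lt_of_le_of_lt (Nat.sub_le _ _) i.castSucc.isLt⟩ : Fin (r+1)) =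
      Fin.castSucc ⟨(i : ℕ) - 1, Nat.lt_of_le_of_lt (Nat.sub_le _ _) i.isLt⟩ := rfl
    rw [h, Fin.snoc_castSucc, Fin.snoc_castSucc, Fin.snoc_castSucc]
    rfl
  · rw [Fin.snoc_last, Fin.snoc_last]
    cases r with
    | zero => simp [lst]
    | succ r =>
      have h : (⟨((Fin.last (r+1) : Fin (r+2)) : ℕ) - 1, Nat.lt_of_le_of_lt (Nat.sub_le _ _) (Fin.last (r+1)).isLt⟩ : Fin (r+2)) =
        Fin.castSucc (Fin.last r) := rfl
      rw [h, Fin.snoc_castSucc]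
      simp [lst]

theorem cnd_snoc (r : ℕ) (k l : Fin r → ℕ) (K L : ℕ) (hL : 1 ≤ L) :
    cnd (r+1) (Fin.snoc (α := fun _ => ℕ) k K) (Fin.snoc (α := fun _ => ℕ) l L) ↔
      cnd r k l ∧ (lst 1 r k ≤ L ∧ L < K) := by
  constructor
  · rintro ⟨h1, h2⟩
    refine ⟨⟨fun i => ?_, fun i j hij => ?_⟩, ?_, ?_⟩
    · simpa using h1 i.castSucc
    · simpa using h2 i.castSucc j.castSucc (by simpa using hij)
    · cases r with
      | zero => exact hL
      | succ r => simpa [lst] using h2 (Fin.last r).castSucc (Fin.last (r+1)) (by simp)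
    · simpa using h1 (Fin.last r)
  · rintro ⟨⟨h1, h2⟩, h3, h4⟩
    refine ⟨fun i => ?_, fun i j => ?_⟩
    · refine Fin.lastCases ?_ (fun i => ?_) i
      · simpa using h4
      · simpa using h1 i
    · refine Fin.lastCases ?_ (fun j => ?_) j
      · refine Fin.lastCases ?_ (fun i => ?_) i
        · intro h; exact absurd h (by simp)
        · intro h
          rw [Fin.snoc_castSucc, Fin.snoc_last]
          cases r with
          | zero => exact i.elim0
          | succ r =>
            have : i = Fin.last r := by
              ext; simp at h ⊢; omega
            rw [this]; exact h3
      · refine Fin.lastCases ?_ (fun i => ?_) i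
        · intro h
          have := j.isLt
          simp at h; omega
        · intro h
          rw [Fin.snoc_castSucc, Fin.snoc_castSucc]
          exact h2 _ _ (by simpa using h)

theorem chain_sum2 (a η : ℕ → ℝ) (N r : ℕ) (hN : 1 ≤ N) : ∀ (w : ℕ → ℝ),
    ∑ k ∈ Fintype.piFinset (fun _ : Fin r => Finset.Icc 1 N),
      ∑ l ∈ Fintype.piFinset (fun _ : Fin r => Finset.Icc 1 N),
      (if cnd r k l then prodT a η r k l * w (lst 1 r k) else 0) =
    ∑ m ∈ Finset.Icc 1 N, yy a η r m * w m := by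
  induction r with
  | zero =>
    intro w
    simp [prodT, lst, yy, cnd, hN]
  | succ r ih =>
    intro w
    rw [sum_pi_snoc]
    refine Finset.sum_congr rfl fun K hK => ?_
    obtain ⟨hK1, hK2⟩ := Finset.mem_Icc.1 hK
    simp only [sum_pi_snoc r (Finset.Icc 1 N)]
    rw [Finset.sum_comm]
    have hl : ∀ k, lst 1 (r+1) (Fin.snoc (α := fun _ => ℕ) k K) = K := fun k => by simp [lst]
    have key : ∀ L ∈ Finset.Icc 1 N,
      ∑ k ∈ Fintype.piFinset (fun _ : Fin r => Finset.Icc 1 N),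
      ∑ l ∈ Fintype.piFinset (fun _ : Fin r => Finset.Icc 1 N),
      (if cnd (r+1) (Fin.snoc (α := fun _ => ℕ) k K) (Fin.snoc (α := fun _ => ℕ) l L) then
        prodT a η (r+1) (Fin.snoc (α := fun _ => ℕ) k K) (Fin.snoc (α := fun _ => ℕ) l L) *
          w (lst 1 (r+1) (Fin.snoc (α := fun _ => ℕ) k K)) else 0) =
      if L < K then ((if L + 1 < K then (2:ℝ) else 1) *
        ∑ x ∈ Finset.Icc 1 L, Tkl a η x L * yy a η r x) * w K else 0 := by
      intro L hL
      obtain ⟨hL1, hL2⟩ := Finset.mem_Icc.1 hL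
      have := ih (fun x => if x ≤ L ∧ L < K then
        Tkl a η x L * (if L + 1 < K then (2:ℝ) else 1) * w K else 0)
      calc _ = _ := ?_
        _ = _ := this
        _ = _ := ?_
      · refine Finset.sum_congr rfl fun k _ => Finset.sum_congr rfl fun l _ => ?_
        rw [hl, prodT_snoc]
        by_cases h1 : cnd r k l
        · by_cases h2 : lst 1 r k ≤ L ∧ L < K
          · rw [if_pos ((cnd_snoc r k l K L hL1).2 ⟨h1, h2⟩), if_pos h1, if_pos h2]; ring
          · rw [if_neg (fun h => h2 ((cnd_snoc r k l K L hL1).1 h).2), if_pos h1, if_neg h2]; ring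
        · rw [if_neg (fun h => h1 ((cnd_snoc r k l K L hL1).1 h).1), if_neg h1]
      · by_cases hLK : L < K
        · simp only [hLK, and_true, if_true, mul_ite, mul_zero]
          rw [← Finset.sum_filter, Finset.mul_sum, Finset.sum_mul]
          refine Finset.sum_congr (by ext; simp; omega) fun x _ => by split_ifs <;> ring
        · simp [hLK]
    rw [Finset.sum_congr rfl key, ← Finset.sum_filter, yy, Finset.sum_mul]
    refine Finset.sum_congr (by ext; simp; omega) fun x _ => rfl

theorem closed_eq (a η : ℕ → ℝ) (n r : ℕ) (hr : 1 ≤ r) :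
        ∑ p ∈ ((Fintype.piFinset fun _ : Fin r => Finset.Icc 1 (n + 1)) ×ˢ
            (Fintype.piFinset fun _ : Fin r => Finset.Icc 1 (n + 1))).filter
            (fun p => (∀ i : Fin r, p.2 i < p.1 i) ∧
              (∀ i j : Fin r, (i : ℕ) + 1 = (j : ℕ) → p.1 i ≤ p.2 j)),
          (∏ i : Fin r, Tkl a η
              (if (i : ℕ) = 0 then 1
                else p.1 ⟨(i : ℕ) - 1, Nat.lt_of_le_of_lt (Nat.sub_le _ _) i.isLt⟩)
              (p.2 i)) *
            rho a (p.1 ⟨r - 1, by omega⟩ - 1) *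
            (2 : ℝ) ^ (Finset.univ.filter (fun i : Fin r => p.2 i + 1 < p.1 i)).card =
      ∑ m ∈ Finset.Icc 1 (n+1), yy a η r m * rho a (m - 1) := by
  rw [← chain_sum2 a η (n+1) r (by omega) (fun m => rho a (m-1)), Finset.sum_filter,
    Finset.sum_product]
  refine Finset.sum_congr rfl fun k _ => Finset.sum_congr rfl fun l _ => ?_
  have h1 : lst 1 r k = k ⟨r - 1, by omega⟩ := by
    cases r with
    | zero => omega
    | succ r => rfl
  have h2 : (2 : ℝ) ^ (Finset.univ.filter (fun i : Fin r => l i + 1 < k i)).card =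
      ∏ i : Fin r, if l i + 1 < k i then (2:ℝ) else 1 := by
    rw [← Finset.prod_filter, Finset.prod_const]
  by_cases h : cnd r k l
  · refine (if_pos h).trans ?_
    rw [if_pos h, h1, prodT, Finset.prod_mul_distrib, ← h2]
    dsimp only
    ring
  · refine (if_neg h).trans ?_
    rw [if_neg h]

theorem coeff_comp_neg (p : Polynomial ℝ) (j : ℕ) :
    (p.comp (-Polynomial.X)).coeff j = p.coeff j * (-1) ^ j := by
  have : (-Polynomial.X : Polynomial ℝ) = Polynomial.C (-1) * Polynomial.X := by simp
  rw [this, Polynomial.comp_C_mul_X_coeff]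

/-- signed even coefficients -/
noncomputable def kc (q : Polynomial ℝ) (r : ℕ) : ℝ := (-1) ^ r * q.coeff (2 * r)

theorem Kr_eq (a η : ℕ → ℝ) (ha : ∀ k : ℕ, 1 ≤ k → 0 < a k) (r n : ℕ) :
    Kr a η r n = kc ((PE a η n).1 * (PE a η n).1.comp (-Polynomial.X)) r := by
  unfold Kr kc
  rw [Polynomial.coeff_mul, Finset.mul_sum]
  refine Finset.sum_nbij' (fun p : ℤ => (((r:ℤ) + p).toNat, ((r:ℤ) - p).toNat))
    (fun x => (x.1 : ℤ) - r) ?_ ?_ ?_ ?_ ?_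
  · intro p hp
    have := Finset.mem_Icc.1 hp
    simp only [Finset.HasAntidiagonal.mem_antidiagonal]; omega
  · intro x hx
    have := Finset.HasAntidiagonal.mem_antidiagonal.1 hx
    simp only [Finset.mem_Icc]; omega
  · intro p hp
    have := Finset.mem_Icc.1 hp
    dsimp only; omega
  · intro x hx
    have := Finset.HasAntidiagonal.mem_antidiagonal.1 hx
    ext
    · dsimp only; omega
    · dsimp only; omega
  · intro p hp
    have := Finset.mem_Icc.1 hp
    dsimp only
    rw [coeff_comp_neg, (coeff_PE a η ha n).1, (coeff_PE a η ha n).1]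
    obtain ⟨j, hj⟩ : ∃ j : ℕ, (r:ℤ) - p = j := ⟨((r:ℤ) - p).toNat, by omega⟩
    have hp' : p = (r:ℤ) - j := by omega
    have hs : (-1 : ℝ) ^ p = (-1) ^ r * (-1) ^ j := by
      rw [hp', zpow_sub₀ (by norm_num), zpow_natCast, zpow_natCast]
      rcases neg_one_pow_eq_or ℝ j with h | h <;> rw [h] <;> ring
    rw [hs, hj, Int.toNat_natCast]
    ring

theorem sum_even_odd (f : ℕ → ℂ) (N : ℕ) :
    ∑ j ∈ Finset.range (2 * N), f j = ∑ m ∈ Finset.range N, (f (2*m) + f (2*m+1)) := by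
  induction N with
  | zero => simp
  | succ N ih =>
    rw [Finset.sum_range_succ _ N, ← ih, show 2 * (N+1) = 2*N+1+1 by ring,
      Finset.sum_range_succ, Finset.sum_range_succ]
    ring

theorem norm_part (a η : ℕ → ℝ) (ha : ∀ k : ℕ, 1 ≤ k → 0 < a k) (t : ℝ) (n : ℕ) :
    ‖Polynomial.aeval (-(Complex.I * t)) (PE a η n).1‖ ^ 2 =
      ∑ r ∈ Finset.range (n + 1), t ^ (2 * r) * Kr a η r n := by
  set P := (PE a η n).1 with hP
  set x : ℂ := -(Complex.I * t) with hx
  have hconj : (starRingEnd ℂ) (Polynomial.aeval x P) = Polynomial.aeval x (P.comp (-Polynomial.X)) := by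
    rw [← Polynomial.aeval_conj, Polynomial.aeval_comp]
    congr 1
    simp [hx]
  have hq : ∀ m, (P * P.comp (-Polynomial.X)).coeff (2*m+1) = 0 := by
    intro m
    have h1 := coeff_comp_neg (P * P.comp (-Polynomial.X)) (2*m+1)
    rw [Polynomial.mul_comp_neg_X, Polynomial.comp_neg_X_comp_neg_X, mul_comm,
      Odd.neg_one_pow ⟨m, rfl⟩] at h1
    linarith
  have hdeg : (P * P.comp (-Polynomial.X)).natDegree < 2 * (n+1) := by
    have h1 := (deg_PE a η n).1
    have h2 : (P.comp (-Polynomial.X)).natDegree ≤ n := by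
      refine Polynomial.natDegree_comp_le.trans ?_
      simpa using h1
    have h3 := Polynomial.natDegree_mul_le_of_le h1 h2
    rw [← hP] at h3
    omega
  have key : (((‖Polynomial.aeval x P‖ ^ 2 : ℝ)) : ℂ) =
      ((∑ r ∈ Finset.range (n + 1), t ^ (2 * r) * Kr a η r n : ℝ) : ℂ) := by
    rw [Complex.ofReal_pow, ← Complex.mul_conj', hconj, ← map_mul,
      Polynomial.aeval_eq_sum_range' hdeg, sum_even_odd, Complex.ofReal_sum]
    refine Finset.sum_congr rfl fun m _ => ?_
    rw [hq, Kr_eq a η ha, kc, ← hP, zero_smul, add_zero, pow_mul, hx, neg_sq, mul_pow, Complex.I_sq,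
      Complex.real_smul]
    push_cast
    rw [mul_pow, pow_mul]
    ring
  exact_mod_cast key

theorem BA_eq (a η : ℕ → ℝ) (t : ℝ)
    (B : ℤ → ℂ) (hBm : B (-1) = 0) (hB0 : B 0 = 1)
    (hB : ∀ n : ℕ, 1 ≤ n →
      B (n : ℤ) = (((1 + a n : ℝ) : ℂ) - Complex.I * (t : ℂ) * ((η n : ℝ) : ℂ)) * B ((n : ℤ) - 1)
        - ((a n : ℝ) : ℂ) * B ((n : ℤ) - 2))
    (A : ℤ → ℂ) (hA0 : A 0 = 0) (hA1 : A 1 = ((a 1 : ℝ) : ℂ))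
    (hA : ∀ n : ℕ, 2 ≤ n →
      A (n : ℤ) = (((1 + a n : ℝ) : ℂ) - Complex.I * (t : ℂ) * ((η n : ℝ) : ℂ)) * A ((n : ℤ) - 1)
        - ((a n : ℝ) : ℂ) * A ((n : ℤ) - 2)) (n : ℕ) :
    B (n : ℤ) - A (n : ℤ) = Polynomial.aeval (-(Complex.I * t)) (PE a η n).1 ∧
    B ((n+1 : ℕ) : ℤ) - A ((n+1 : ℕ) : ℤ) = Polynomial.aeval (-(Complex.I * t)) (PE a η (n+1)).1 := by
  induction n with
  | zero =>
    refine ⟨by simp [PE, hB0, hA0], ?_⟩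
    have h := hB 1 le_rfl
    norm_num [hB0, hBm] at h
    simp [PE, h, hA1]
    ring
  | succ n ih =>
    refine ⟨ih.2, ?_⟩
    have h1 := hB (n+1+1) (by omega)
    have h2 := hA (n+1+1) (by omega)
    have e1 : (((n+1+1 : ℕ) : ℤ)) - 1 = ((n+1 : ℕ) : ℤ) := by push_cast; ring
    have e2 : (((n+1+1 : ℕ) : ℤ)) - 2 = ((n : ℕ) : ℤ) := by push_cast; ring
    rw [e1, e2] at h1 h2
    have e3 : (PE a η (n+1+1)).1 = (PE a η (n+1)).1 +
      (Polynomial.C (a (n+1+1)) * ((PE a η (n+1)).1 - (PE a η n).1) +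
        Polynomial.C (η (n+1+1)) * Polynomial.X * (PE a η (n+1)).1) := by
      have : (PE a η (n+1)).1 - (PE a η n).1 = (PE a η (n+1)).2 := by
        rw [show (PE a η (n+1)).1 = (PE a η n).1 + (PE a η (n+1)).2 from rfl]; ring
      rw [this]; rfl
    rw [e3, h1, h2]
    simp only [map_add, map_mul, map_sub, Polynomial.aeval_C, Polynomial.aeval_X, ← ih.1, ← ih.2]
    simp only [Complex.coe_algebraMap]
    push_cast
    ring

theorem kc_add (p q : Polynomial ℝ) (r : ℕ) : kc (p + q) r = kc p r + kc q r := by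
  simp [kc, mul_add]
theorem kc_sub (p q : Polynomial ℝ) (r : ℕ) : kc (p - q) r = kc p r - kc q r := by
  simp [kc, mul_sub]
theorem kc_C (c : ℝ) (p : Polynomial ℝ) (r : ℕ) : kc (Polynomial.C c * p) r = c * kc p r := by
  simp [kc]; ring
theorem kc_X (p : Polynomial ℝ) (r : ℕ) : kc (Polynomial.X ^ 2 * p) (r+1) = - kc p r := by
  unfold kc
  rw [show 2 * (r+1) = 2 * r + 2 by ring, Polynomial.coeff_X_pow_mul]; ring

/-- The four scalar sequences. -/
theorem scalar_recs (a η : ℕ → ℝ) : ∃ M F H : ℕ → ℕ → ℝ, ∃ N : ℕ → ℕ → ℝ,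
    (∀ r n, N r n = kc ((PE a η n).1 * (PE a η n).1.comp (-Polynomial.X)) r) ∧
    (∀ r, M r 0 = 0) ∧ (∀ r, F r 0 = 0) ∧ (∀ r, H r 0 = 0) ∧
    (∀ r n, N r (n+1) = N r n + H r (n+1) - M r (n+1)) ∧
    (∀ r n, H r (n+1) = a (n+1) * H r n + 2 * M r (n+1)) ∧
    (∀ r n, F (r+1) (n+1) = a (n+1) * F (r+1) n - 2 * η (n+1) * N r n) ∧
    (∀ r n, M (r+1) (n+1) = a (n+1) ^ 2 * M (r+1) n - a (n+1) * η (n+1) * F (r+1) n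
      + η (n+1) ^ 2 * N r n) := by
  set P := fun n => (PE a η n).1 with hP
  set E := fun n => (PE a η n).2 with hE
  set P' := fun n => (PE a η n).1.comp (-Polynomial.X) with hP'
  set E' := fun n => (PE a η n).2.comp (-Polynomial.X) with hE'
  have p1 : ∀ n, P (n+1) = P n + E (n+1) := fun n => rfl
  have p2 : ∀ n, E (n+1) = Polynomial.C (a (n+1)) * E n + Polynomial.C (η (n+1)) * Polynomial.X * P n :=
    fun n => rfl
  have p3 : ∀ n, P' (n+1) = P' n + E' (n+1) := fun n => by
    show (P (n+1)).comp _ = (P n).comp _ + (E (n+1)).comp _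
    rw [p1, Polynomial.add_comp]
  have p4 : ∀ n, E' (n+1) = Polynomial.C (a (n+1)) * E' n - Polynomial.C (η (n+1)) * Polynomial.X * P' n :=
    fun n => by
    show (E (n+1)).comp _ = _ * (E n).comp _ - _ * (P n).comp _
    rw [p2]
    simp
    ring
  have p5 : E 0 = 0 := rfl
  have p6 : E' 0 = 0 := by simp [hE', PE]
  refine ⟨fun r n => kc (E n * E' n) r,
    fun r n => kc (Polynomial.X * (E n * P' n - E' n * P n)) r,
    fun r n => kc (E n * P' n + E' n * P n) r, fun r n => kc (P n * P' n) r,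
    fun r n => rfl, ?_, ?_, ?_, ?_, ?_, ?_, ?_⟩
  · intro r; simp [p5, kc]
  · intro r; simp [p5, p6, kc]
  · intro r; simp [p5, p6, kc]
  · intro r n
    dsimp only
    rw [← kc_add, ← kc_sub, p1, p3]
    congr 1
    ring
  · intro r n
    dsimp only
    rw [← kc_C, ← kc_C, ← kc_add, p1, p3, p2, p4]
    congr 1
    simp only [map_ofNat]
    ring
  · intro r n
    dsimp only
    rw [← neg_neg (kc (P n * P' n) r), ← kc_X, mul_neg, sub_neg_eq_add, ← kc_C, ← kc_C, ← kc_add,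
      p1, p3, p2, p4]
    congr 1
    simp only [map_ofNat, map_mul]
    ring
  · intro r n
    dsimp only
    rw [← neg_neg (kc (P n * P' n) r), ← kc_X, mul_neg, ← sub_eq_add_neg, ← kc_C, ← kc_C, ← kc_C,
      ← kc_sub, ← kc_sub, p2, p4]
    congr 1
    simp only [map_mul, map_pow]
    ring

theorem main_closed (a η : ℕ → ℝ) (ha : ∀ k : ℕ, 1 ≤ k → 0 < a k) (r : ℕ) : ∀ n : ℕ,
    Kr a η r n = ∑ m ∈ Finset.Icc 1 (n+1), yy a η r m * rho a (m - 1) := by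
  obtain ⟨M, F, H, N, hN, hM0, hF0, hH0, rN, rH, rF, rM⟩ := scalar_recs a η
  have hK : ∀ r n, Kr a η r n = N r n := fun r n => by rw [hN, Kr_eq a η ha]
  have hD0 : ∀ n, Delta a η 0 n = 1 := fun n => by simp [Delta]
  simp only [hK]
  induction r with
  | zero =>
    intro n
    rw [← hK]
    simp [Kr, yy, hD0, rho]
  | succ r ih =>
    have cF : ∀ n, F (r+1) n = -2 * ∑ k ∈ Finset.Icc 1 n, Rkl a η k n * (yy a η r k * rho a (k-1)) := by
      intro n
      induction n with
      | zero => simp [hF0]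
      | succ n ihn =>
        have e : ∑ k ∈ Finset.Icc 1 n, Rkl a η k n * (yy a η r k * rho a (k-1)) =
            ∑ k ∈ Finset.Icc 1 (n+1), Rkl a η k n * (yy a η r k * rho a (k-1)) := by
          rw [Finset.sum_Icc_succ_top (by omega), Rkl_empty]; ring
        rw [rF, ihn, ih, e, ← sub_eq_zero]
        simp only [Finset.mul_sum]
        rw [← Finset.sum_sub_distrib, ← Finset.sum_sub_distrib]
        refine Finset.sum_eq_zero fun k hk => ?_
        rw [Rkl_succ a η ha _ _ (Finset.mem_Icc.1 hk).2]
        ring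
    have cM : ∀ n, M (r+1) n = ∑ k ∈ Finset.Icc 1 n, Rkl a η k n ^ 2 * (yy a η r k * rho a (k-1)) := by
      intro n
      induction n with
      | zero => simp [hM0]
      | succ n ihn =>
        have e : ∑ k ∈ Finset.Icc 1 n, Rkl a η k n * (yy a η r k * rho a (k-1)) =
            ∑ k ∈ Finset.Icc 1 (n+1), Rkl a η k n * (yy a η r k * rho a (k-1)) := by
          rw [Finset.sum_Icc_succ_top (by omega), Rkl_empty]; ring
        have e2 : ∑ k ∈ Finset.Icc 1 n, Rkl a η k n ^ 2 * (yy a η r k * rho a (k-1)) =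
            ∑ k ∈ Finset.Icc 1 (n+1), Rkl a η k n ^ 2 * (yy a η r k * rho a (k-1)) := by
          rw [Finset.sum_Icc_succ_top (by omega), Rkl_empty]; ring
        rw [rM, cF, ihn, ih, e, e2, ← sub_eq_zero]
        simp only [Finset.mul_sum]
        rw [← Finset.sum_sub_distrib, ← Finset.sum_add_distrib, ← Finset.sum_sub_distrib]
        refine Finset.sum_eq_zero fun k hk => ?_
        rw [Rkl_succ a η ha _ _ (Finset.mem_Icc.1 hk).2]
        ring
    have cM' : ∀ n, ∑ k ∈ Finset.Icc 1 n, Tkl a η k n * yy a η r k = M (r+1) n / rho a n := by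
      intro n
      rw [cM, Finset.sum_div]
      refine Finset.sum_congr rfl fun k _ => ?_
      rw [Tkl]; ring
    have cH : ∀ n, H (r+1) n = 2 * rho a n * ∑ l ∈ Finset.Icc 1 n, M (r+1) l / rho a l := by
      intro n
      induction n with
      | zero => simp [hH0]
      | succ n ihn =>
        have := (rho_pos a ha (n+1)).ne'
        rw [rH, ihn, Finset.sum_Icc_succ_top (by omega), mul_add]
        have e : 2 * rho a (n+1) * (M (r+1) (n+1) / rho a (n+1)) = 2 * M (r+1) (n+1) := by
          field_simp
        rw [e, rho_succ]; ring
    intro n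
    induction n with
    | zero =>
      rw [hN]
      have : (PE a η 0).1 = 1 := rfl
      rw [this]
      simp [kc, yy, Polynomial.coeff_one]
    | succ n ihn =>
      have hne := (rho_pos a ha (n+1)).ne'
      rw [rN, Finset.sum_Icc_succ_top (by omega), ← ihn, cH]
      have e : yy a η (r+1) (n+1+1) = 2 * ∑ l ∈ Finset.Icc 1 n, M (r+1) l / rho a l
          + M (r+1) (n+1) / rho a (n+1) := by
        rw [yy, Finset.sum_Ico_succ_top (by omega), cM', if_neg (lt_irrefl _), one_mul, Finset.mul_sum]
        congr 1
        refine Finset.sum_congr (by ext; simp) fun l hl => ?_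
        rw [cM', if_pos (by have := Finset.mem_Icc.1 hl; omega)]
      rw [e, Finset.sum_Icc_succ_top (by omega), Nat.add_sub_cancel]
      field_simp
      ring

/-- `|B n - A n|² = ∑_{r=0}^n t^{2r} K_r(n)` with `K_r` the alternating sum of products of
`Δ`'s; `K_0(n) = 1`, and for `1 ≤ r ≤ n` the closed form of `K_r(n)` as a sum over chains
`1 ≤ l₁ < k₂ ≤ l₂ < ⋯ < k_r ≤ l_r < k_{r+1} ≤ n+1` of
`T_1^{l₁} ⋯ T_{k_r}^{l_r} ρ_{k_{r+1}-1} 2^{H_r}` with `H_r = #{i : l_i + 1 < k_{i+1}}`. -/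
theorem stmt_14
    (a η : ℕ → ℝ) (ha : ∀ k : ℕ, 1 ≤ k → 0 < a k) (t : ℝ)
    (B : ℤ → ℂ) (hBm : B (-1) = 0) (hB0 : B 0 = 1)
    (hB : ∀ n : ℕ, 1 ≤ n →
      B (n : ℤ) = (((1 + a n : ℝ) : ℂ) - Complex.I * (t : ℂ) * ((η n : ℝ) : ℂ)) * B ((n : ℤ) - 1)
        - ((a n : ℝ) : ℂ) * B ((n : ℤ) - 2))
    (A : ℤ → ℂ) (hA0 : A 0 = 0) (hA1 : A 1 = ((a 1 : ℝ) : ℂ))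
    (hA : ∀ n : ℕ, 2 ≤ n →
      A (n : ℤ) = (((1 + a n : ℝ) : ℂ) - Complex.I * (t : ℂ) * ((η n : ℝ) : ℂ)) * A ((n : ℤ) - 1)
        - ((a n : ℝ) : ℂ) * A ((n : ℤ) - 2)) :
    (∀ n : ℕ,
      ‖B (n : ℤ) - A (n : ℤ)‖ ^ 2 =
        ∑ r ∈ Finset.range (n + 1), t ^ (2 * r) * Kr a η r n) ∧
    (∀ n : ℕ, Kr a η 0 n = 1) ∧
    (∀ (n r : ℕ) (hr : 1 ≤ r) (_ : r ≤ n),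
      Kr a η r n =
        ∑ p ∈ ((Fintype.piFinset fun _ : Fin r => Finset.Icc 1 (n + 1)) ×ˢ
            (Fintype.piFinset fun _ : Fin r => Finset.Icc 1 (n + 1))).filter
            (fun p => (∀ i : Fin r, p.2 i < p.1 i) ∧
              (∀ i j : Fin r, (i : ℕ) + 1 = (j : ℕ) → p.1 i ≤ p.2 j)),
          (∏ i : Fin r, Tkl a η
              (if (i : ℕ) = 0 then 1
                else p.1 ⟨(i : ℕ) - 1, Nat.lt_of_le_of_lt (Nat.sub_le _ _) i.isLt⟩)
              (p.2 i)) *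
            rho a (p.1 ⟨r - 1, by omega⟩ - 1) *
            (2 : ℝ) ^ (Finset.univ.filter (fun i : Fin r => p.2 i + 1 < p.1 i)).card) := by
  refine ⟨fun n => ?_, fun n => ?_, fun n r hr _ => ?_⟩
  · rw [(BA_eq a η t B hBm hB0 hB A hA0 hA1 hA n).1]
    exact norm_part a η ha t n
  · simp [Kr, Delta]
  · rw [main_closed a η ha r n]
    exact (closed_eq a η n r hr).symm
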